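/- Let N ≥ 2, ρ = e^{2πi/N}, and let A_i = {e^{2πiθ} : i/N ≤ θ < (i+1)/N} for i = 0, …, N−1. For a measurable function u : 𝕋 → 𝕋, define the irreducible Cuntz family π^u = (S_i^u)_{i=0}^{N−1} on L²(𝕋) by (S_i^u ξ)(z) = √N · χ_{A_i}(z) · u(z) · ξ(z^N). Let u, u' : 𝕋 → 𝕋 be measurable. Then the following are equivalent: (i) π^u and π^{u'} are unitarily equivalent, i.e., there exists a unitary W on L²(𝕋) with W S_i^u = S_i^{u'} W for all i = 0, …, N−1; (ii) the cocycles u and u' cobound: there exists a measurable function Δ : 𝕋 → 𝕋 such that Δ(z) u(z) = u'(z) Δ(z^N) for almost every z ∈ 𝕋. -/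

import Mathlib

open MeasureTheory Real

noncomputable section

instance : Fact (0 < 2 * Real.pi) := ⟨by positivity⟩

/-- The circle `𝕋 = ℝ/2πℤ`, written additively; the point `(s : 𝕋)` corresponds to `e^{is}`
and `N • z` corresponds to `z ↦ z^N`. -/
abbrev Circle2π : Type := AddCircle (2 * Real.pi)

/-- Normalized Haar (probability) measure on the circle. -/
abbrev haarT : Measure Circle2π := AddCircle.haarAddCircle

/-- `L²(𝕋)`. -/
abbrev HT : Type := Lp ℂ 2 haarT

/-- The arc `A_i = {e^{2πiθ} : i/N ≤ θ < (i+1)/N}`. -/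
def arc (N : ℕ) (i : Fin N) : Set Circle2π :=
  (fun θ : ℝ => ((2 * Real.pi * θ : ℝ) : Circle2π)) ''
    Set.Ico (((i : ℕ) : ℝ) / N) ((((i : ℕ) : ℝ) + 1) / N)

/-!
A unitary intertwining the two families maps `L²(A)` onto itself whenever `A` is an `N`-adic arc,
because `Sᵢ^u` carries `L²(A)` onto `L²(Aᵢ ∩ T⁻¹A)`, where `T z = z^N`, whatever the cocycle `u`.
The sets `A` with `W L²(A) = L²(A)` form a σ-algebra, complements coming from orthogonal
complements, so `W` preserves `L²(A)` for every Borel set `A`. Such a unitary is multiplication by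
the unimodular function `Δ = W 1`, and multiplication by `Δ` intertwines the two families exactly
when `Δ` cobounds the cocycles.
-/

open scoped ENNReal InnerProductSpace

section SupportedLp

variable {α 𝕜 E : Type*} [MeasurableSpace α] {p : ℝ≥0∞} {μ : Measure α}
  [NormedRing 𝕜] [NormedAddCommGroup E] [Module 𝕜 E] [IsBoundedSMul 𝕜 E]

variable (𝕜 E p μ) in
/-- The subspace `Lᵖ(A)` of `Lᵖ(μ)`: the functions that vanish almost everywhere off `A`. -/
def supportedLp (A : Set α) : Submodule 𝕜 (Lp E p μ) where
  carrier := {ξ | ∀ᵐ x ∂μ, x ∉ A → ξ x = 0}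
  zero_mem' := by
    filter_upwards [Lp.coeFn_zero E p μ] with x hx _ using hx
  add_mem' {ξ η} hξ hη := by
    filter_upwards [hξ, hη, Lp.coeFn_add ξ η] with x hξx hηx hadd hx
    exact hadd.trans (by simp [hξx hx, hηx hx])
  smul_mem' c ξ hξ := by
    filter_upwards [hξ, Lp.coeFn_smul c ξ] with x hξx hsmul hx
    exact hsmul.trans (by simp [hξx hx])

theorem mem_supportedLp {A : Set α} {ξ : Lp E p μ} :
    ξ ∈ supportedLp 𝕜 E p μ A ↔ ∀ᵐ x ∂μ, x ∉ A → ξ x = 0 :=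
  Iff.rfl

theorem supportedLp_univ : supportedLp 𝕜 E p μ Set.univ = ⊤ :=
  eq_top_iff.2 fun _ _ => mem_supportedLp.2 (.of_forall fun x hx => absurd (Set.mem_univ x) hx)

theorem supportedLp_iInter {ι : Type*} [Countable ι] (A : ι → Set α) :
    supportedLp 𝕜 E p μ (⋂ i, A i) = ⨅ i, supportedLp 𝕜 E p μ (A i) := by
  ext ξ
  simp only [Submodule.mem_iInf, mem_supportedLp, ← ae_all_iff, Set.mem_iInter, not_forall,
    forall_exists_index]

theorem ae_eq_indicator_iff_mem_supportedLp {A : Set α} {ξ η : Lp E p μ} :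
    η =ᵐ[μ] A.indicator ξ ↔
      η ∈ supportedLp 𝕜 E p μ A ∧ ξ - η ∈ supportedLp 𝕜 E p μ Aᶜ := by
  simp only [mem_supportedLp, Set.mem_compl_iff, not_not, ← Filter.eventually_and]
  refine Filter.eventually_congr ?_
  filter_upwards [Lp.coeFn_sub ξ η] with x hsub
  rw [hsub, Pi.sub_apply, sub_eq_zero, eq_comm (a := ξ x)]
  by_cases hx : x ∈ A <;> simp [hx]

theorem exists_mem_supportedLp_sub_mem_supportedLp_compl {A : Set α} (hA : MeasurableSet A)
    (ξ : Lp E p μ) :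
    ∃ η ∈ supportedLp 𝕜 E p μ A, ξ - η ∈ supportedLp 𝕜 E p μ Aᶜ :=
  ⟨((Lp.memLp ξ).indicator hA).toLp, ae_eq_indicator_iff_mem_supportedLp.1 (MemLp.coeFn_toLp _)⟩

end SupportedLp

section InvariantSets

variable {α 𝕜 E : Type*} [MeasurableSpace α] {μ : Measure α}
  [RCLike 𝕜] [NormedAddCommGroup E] [InnerProductSpace 𝕜 E]

theorem inner_eq_zero_of_mem_supportedLp {A : Set α} {ξ η : Lp E 2 μ}
    (hξ : ξ ∈ supportedLp 𝕜 E 2 μ A) (hη : η ∈ supportedLp 𝕜 E 2 μ Aᶜ) : ⟪ξ, η⟫_𝕜 = 0 := by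
  rw [L2.inner_def]
  refine integral_eq_zero_of_ae ?_
  filter_upwards [hξ, hη] with x hξx hηx
  by_cases hx : x ∈ A
  · simp [hηx (not_not.2 hx)]
  · simp [hξx hx]

theorem orthogonal_supportedLp {A : Set α} (hA : MeasurableSet A) :
    (supportedLp 𝕜 E 2 μ A)ᗮ = supportedLp 𝕜 E 2 μ Aᶜ := by
  refine le_antisymm (fun ξ hξ => ?_)
    fun ξ hξ η hη => inner_eq_zero_of_mem_supportedLp hη hξ
  obtain ⟨η, hη, hsub⟩ := exists_mem_supportedLp_sub_mem_supportedLp_compl (𝕜 := 𝕜) hA ξ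
  have hη_self : ⟪η, η⟫_𝕜 = 0 := by
    have h := inner_eq_zero_of_mem_supportedLp hη hsub
    rwa [inner_sub_right, hξ η hη, zero_sub, neg_eq_zero] at h
  rwa [inner_self_eq_zero.1 hη_self, sub_zero] at hsub

/-- The σ-algebra of the measurable sets `A` for which the unitary `W` maps `L²(A)` onto
itself. -/
@[reducible]
def invariantSets (W : Lp E 2 μ ≃ₗᵢ[𝕜] Lp E 2 μ) : MeasurableSpace α :=
  let Invariant (A : Set α) : Prop := MeasurableSet A ∧
    (supportedLp 𝕜 E 2 μ A).map (W.toLinearEquiv : Lp E 2 μ →ₗ[𝕜] Lp E 2 μ) =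
      supportedLp 𝕜 E 2 μ A
  have compl {A : Set α} (hA : Invariant A) : Invariant Aᶜ := by
    refine ⟨hA.1.compl, ?_⟩
    rw [← orthogonal_supportedLp hA.1, Submodule.map_orthogonal_equiv, hA.2]
  have univ : Invariant Set.univ := by
    refine ⟨.univ, ?_⟩
    rw [supportedLp_univ, Submodule.map_top, LinearEquiv.range]
  have iInter {A : ℕ → Set α} (hA : ∀ n, Invariant (A n)) : Invariant (⋂ n, A n) := by
    refine ⟨.iInter fun n => (hA n).1, ?_⟩
    rw [supportedLp_iInter, Submodule.map_iInf _ W.injective]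
    exact iInf_congr fun n => (hA n).2
  { MeasurableSet' := Invariant
    measurableSet_empty := by simpa using compl univ
    measurableSet_compl := fun _ => compl
    measurableSet_iUnion := fun A hA => by
      simpa [Set.compl_iInter] using compl (iInter fun n => compl (hA n)) }

theorem measurableSet_invariantSets {W : Lp E 2 μ ≃ₗᵢ[𝕜] Lp E 2 μ} {A : Set α} :
    MeasurableSet[invariantSets W] A ↔ MeasurableSet A ∧
      (supportedLp 𝕜 E 2 μ A).map (W.toLinearEquiv : Lp E 2 μ →ₗ[𝕜] Lp E 2 μ) =
        supportedLp 𝕜 E 2 μ A :=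
  Iff.rfl

end InvariantSets

section UnimodularMultiplication

variable {α 𝕜 E : Type*} [MeasurableSpace α] {p : ℝ≥0∞} [Fact (1 ≤ p)] {μ : Measure α}
  [NormedField 𝕜] [NormedAddCommGroup E] [NormedSpace 𝕜 E]

variable (E p) in
/-- The isometry `ξ ↦ g ξ` of `Lᵖ(μ)` given by a function `g` of modulus one. -/
def unimodularSMul (g : α → 𝕜) (hg : AEStronglyMeasurable g μ) (hg_norm : ∀ᵐ x ∂μ, ‖g x‖ = 1) :
    Lp E p μ →ₗᵢ[𝕜] Lp E p μ :=
  have hg_top : MemLp g ∞ μ := memLp_top_of_bound hg 1 (hg_norm.mono fun _ => le_of_eq)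
  let gLp : Lp 𝕜 ∞ μ := hg_top.toLp g
  { toFun := fun ξ => gLp • ξ
    map_add' := Lp.add_smul gLp
    map_smul' := fun c ξ => (Lp.smul_comm c gLp ξ).symm
    norm_map' := fun ξ => by
      refine congrArg ENNReal.toReal (eLpNorm_congr_norm_ae ?_)
      filter_upwards [Lp.coeFn_lpSMul (r := p) gLp ξ, hg_top.coeFn_toLp, hg_norm]
        with x hsmul hgx hnorm
      change ‖(gLp • ξ : Lp E p μ) x‖ = ‖ξ x‖
      rw [hsmul, Pi.smul_apply', hgx, norm_smul, hnorm, one_mul] }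

theorem coeFn_unimodularSMul {g : α → 𝕜} (hg : AEStronglyMeasurable g μ)
    (hg_norm : ∀ᵐ x ∂μ, ‖g x‖ = 1) (ξ : Lp E p μ) :
    unimodularSMul E p g hg hg_norm ξ =ᵐ[μ] fun x => g x • ξ x := by
  have hg_top : MemLp g ∞ μ := memLp_top_of_bound hg 1 (hg_norm.mono fun _ => le_of_eq)
  filter_upwards [Lp.coeFn_lpSMul (r := p) (hg_top.toLp g) ξ, hg_top.coeFn_toLp] with x hsmul hgx
  exact hsmul.trans (congrArg (· • ξ x) hgx)

theorem unimodularSMul_surjective {g : α → 𝕜} (hg : AEStronglyMeasurable g μ)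
    (hg_norm : ∀ᵐ x ∂μ, ‖g x‖ = 1) : Function.Surjective (unimodularSMul E p g hg hg_norm) := by
  have hinv_norm : ∀ᵐ x ∂μ, ‖(g x)⁻¹‖ = 1 := hg_norm.mono fun x hx => by simp [hx]
  intro ξ
  refine ⟨unimodularSMul E p _ hg.inv₀ hinv_norm ξ, Lp.ext ?_⟩
  filter_upwards [coeFn_unimodularSMul hg hg_norm (unimodularSMul E p _ hg.inv₀ hinv_norm ξ),
    coeFn_unimodularSMul hg.inv₀ hinv_norm ξ, hg_norm] with x hx hinvx hnorm
  have hgx : g x ≠ 0 := norm_ne_zero_iff.1 (hnorm ▸ one_ne_zero)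
  rw [hx, hinvx, Pi.inv_apply, smul_inv_smul₀ hgx]

end UnimodularMultiplication

section Symbol

variable {α 𝕜 : Type*} [MeasurableSpace α] {p : ℝ≥0∞} {μ : Measure α}

theorem ae_enorm_eq_of_eLpNorm_indicator_eq {E F : Type*} [NormedAddCommGroup E]
    [NormedAddCommGroup F] [SigmaFinite μ] (hp_zero : p ≠ 0) (hp_top : p ≠ ∞) {f : α → E}
    {g : α → F} (hf : AEStronglyMeasurable f μ) (hg : AEStronglyMeasurable g μ)
    (h : ∀ A, MeasurableSet A → eLpNorm (A.indicator f) p μ = eLpNorm (A.indicator g) p μ) :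
    ∀ᵐ x ∂μ, ‖f x‖ₑ = ‖g x‖ₑ := by
  have hp_pos : 0 < p.toReal := ENNReal.toReal_pos hp_zero hp_top
  have hpow : (fun x => ‖f x‖ₑ ^ p.toReal) =ᵐ[μ] fun x => ‖g x‖ₑ ^ p.toReal := by
    refine ae_eq_of_forall_setLIntegral_eq_of_sigmaFinite₀ (hf.enorm.pow_const _)
      (hg.enorm.pow_const _) fun A hA _ => ?_
    have hA_norm := h A hA
    rw [eLpNorm_indicator_eq_eLpNorm_restrict hA, eLpNorm_indicator_eq_eLpNorm_restrict hA,
      eLpNorm_eq_lintegral_rpow_enorm_toReal hp_zero hp_top,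
      eLpNorm_eq_lintegral_rpow_enorm_toReal hp_zero hp_top] at hA_norm
    exact ENNReal.rpow_left_injective (one_div_pos.2 hp_pos).ne' hA_norm
  filter_upwards [hpow] with x hx using ENNReal.rpow_left_injective hp_pos.ne' hx

theorem map_ae_eq_indicator {E F : Type*} [NormedRing 𝕜] [NormedAddCommGroup E] [Module 𝕜 E]
    [IsBoundedSMul 𝕜 E] [NormedAddCommGroup F] [Module 𝕜 F] [IsBoundedSMul 𝕜 F]
    {W : Lp E p μ →ₗ[𝕜] Lp F p μ} {A : Set α}
    (hA : (supportedLp 𝕜 E p μ A).map W ≤ supportedLp 𝕜 F p μ A)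
    (hAc : (supportedLp 𝕜 E p μ Aᶜ).map W ≤ supportedLp 𝕜 F p μ Aᶜ)
    {ξ η : Lp E p μ} (h : η =ᵐ[μ] A.indicator ξ) : W η =ᵐ[μ] A.indicator (W ξ) := by
  obtain ⟨hη, hsub⟩ := (ae_eq_indicator_iff_mem_supportedLp (𝕜 := 𝕜)).1 h
  refine (ae_eq_indicator_iff_mem_supportedLp (𝕜 := 𝕜)).2
    ⟨hA (Submodule.mem_map_of_mem hη), ?_⟩
  rw [← map_sub]
  exact hAc (Submodule.mem_map_of_mem hsub)

variable [RCLike 𝕜] [IsFiniteMeasure μ]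

theorem indicatorConstLp_ae_eq_indicator_const {A : Set α} (hA : MeasurableSet A) (c : 𝕜) :
    indicatorConstLp p hA (measure_ne_top μ A) c =ᵐ[μ] A.indicator (Lp.const p μ c) := by
  filter_upwards [indicatorConstLp_coeFn (p := p) (hs := hA) (hμs := measure_ne_top μ A) (c := c),
    Lp.coeFn_const (p := p) (μ := μ) (c := c)] with x hx hconst
  classical
  rw [hx, Set.indicator_apply, Set.indicator_apply, hconst, Function.const_apply]

variable [Fact (1 ≤ p)]

theorem ae_norm_map_const_one_eq_one (hp_top : p ≠ ∞) (W : Lp 𝕜 p μ →ₗᵢ[𝕜] Lp 𝕜 p μ)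
    (hW : ∀ A, MeasurableSet A →
      (supportedLp 𝕜 𝕜 p μ A).map W.toLinearMap ≤ supportedLp 𝕜 𝕜 p μ A) :
    ∀ᵐ x ∂μ, ‖W (Lp.const p μ 1) x‖ = 1 := by
  have hp_zero : p ≠ 0 := (zero_lt_one.trans_le Fact.out).ne'
  have henorm := ae_enorm_eq_of_eLpNorm_indicator_eq hp_zero hp_top
    (Lp.aestronglyMeasurable (W (Lp.const p μ 1))) (Lp.aestronglyMeasurable (Lp.const p μ (1 : 𝕜)))
    fun A hA => by
      have hind := indicatorConstLp_ae_eq_indicator_const (p := p) (μ := μ) hA (1 : 𝕜)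
      have hW_ind : W (indicatorConstLp p hA (measure_ne_top μ A) 1) =ᵐ[μ]
          A.indicator (W (Lp.const p μ 1)) := map_ae_eq_indicator (hW A hA) (hW Aᶜ hA.compl) hind
      rw [← eLpNorm_congr_ae hind, ← eLpNorm_congr_ae hW_ind]
      exact (ENNReal.toReal_eq_toReal_iff' (Lp.eLpNorm_ne_top _) (Lp.eLpNorm_ne_top _)).1
        (W.norm_map _)
  filter_upwards [henorm, Lp.coeFn_const (p := p) (μ := μ) (c := (1 : 𝕜))] with x hx hconst
  rw [hconst, Function.const_apply, enorm_eq_iff_norm_eq, norm_one] at hx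
  exact hx

theorem map_ae_eq_mul_map_const_one (hp_top : p ≠ ∞) (W : Lp 𝕜 p μ →ₗᵢ[𝕜] Lp 𝕜 p μ)
    (hW : ∀ A, MeasurableSet A →
      (supportedLp 𝕜 𝕜 p μ A).map W.toLinearMap ≤ supportedLp 𝕜 𝕜 p μ A) (ξ : Lp 𝕜 p μ) :
    W ξ =ᵐ[μ] fun x => W (Lp.const p μ 1) x * ξ x := by
  set D : Lp 𝕜 p μ := W (Lp.const p μ 1)
  let M := unimodularSMul 𝕜 p D (Lp.aestronglyMeasurable D)
    (ae_norm_map_const_one_eq_one hp_top W hW)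
  have hM (η : Lp 𝕜 p μ) : M η =ᵐ[μ] fun x => D x * η x := coeFn_unimodularSMul _ _ η
  suffices hWM : W ξ = M ξ by rw [hWM]; exact hM ξ
  refine Lp.induction hp_top (fun η : Lp 𝕜 p μ => W η = M η) ?_ ?_ ?_ ξ
  · intro c A hA hμA
    rw [Lp.simpleFunc.coe_indicatorConst]
    have hind := indicatorConstLp_ae_eq_indicator_const (p := p) (μ := μ) hA c
    have hconst : Lp.const p μ c = c • Lp.const p μ (1 : 𝕜) := by
      simpa using (Lp.constₗ p μ 𝕜).map_smul c (1 : 𝕜)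
    have hW_const : W (Lp.const p μ c) = c • D := by rw [hconst, map_smul]
    refine Lp.ext ?_
    filter_upwards [map_ae_eq_indicator (hW A hA) (hW Aᶜ hA.compl) hind,
      hM (indicatorConstLp p hA hμA.ne c), Lp.coeFn_smul c D,
      indicatorConstLp_coeFn (p := p) (hs := hA) (hμs := hμA.ne) (c := c)]
      with x hWx hMx hsmul hindx
    refine hWx.trans ?_
    rw [hMx, hindx, LinearIsometry.coe_toLinearMap, hW_const]
    by_cases hx : x ∈ A <;> simp [hx, hsmul, mul_comm]
  · intro f g hf hg _ hWf hWg
    rw [map_add, map_add, hWf, hWg]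
  · exact isClosed_eq W.continuous M.continuous

theorem exists_unimodular_forall_map_ae_eq_mul (hp_top : p ≠ ∞) (W : Lp 𝕜 p μ →ₗᵢ[𝕜] Lp 𝕜 p μ)
    (hW : ∀ A, MeasurableSet A →
      (supportedLp 𝕜 𝕜 p μ A).map W.toLinearMap ≤ supportedLp 𝕜 𝕜 p μ A) :
    ∃ Δ : α → 𝕜, Measurable Δ ∧ (∀ x, ‖Δ x‖ = 1) ∧ ∀ ξ, W ξ =ᵐ[μ] fun x => Δ x * ξ x := by
  classical
  have hD := Lp.aestronglyMeasurable (W (Lp.const p μ 1))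
  have hD_meas : Measurable (hD.mk _) := hD.stronglyMeasurable_mk.measurable
  refine ⟨fun x => if ‖hD.mk _ x‖ = 1 then hD.mk _ x else 1,
    .ite (measurableSet_eq_fun hD_meas.norm measurable_const) hD_meas measurable_const,
    fun x => ?_, fun ξ => ?_⟩
  · dsimp only
    split_ifs with hx
    exacts [hx, norm_one]
  · filter_upwards [map_ae_eq_mul_map_const_one hp_top W hW ξ, hD.ae_eq_mk,
      ae_norm_map_const_one_eq_one hp_top W hW] with x hWx hmk hnorm
    rw [hmk] at hWx hnorm
    simp only [hWx, hnorm, if_true]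

end Symbol

section FixedPoint

theorem measurable_of_eq_add_comp_div {α : Type*} [MeasurableSpace α] {T : α → α}
    (hT : Measurable T) {d θ : α → ℝ} (hd : Measurable d) {c C : ℝ} (hc : 1 < |c|)
    (hθ : ∀ x, |θ x| ≤ C) (h : ∀ x, θ x = (d x + θ (T x)) / c) : Measurable θ := by
  let Φ (f : α → ℝ) (x : α) : ℝ := (d x + f (T x)) / c
  have hΦ_meas (n : ℕ) : Measurable (Φ^[n] 0) := by
    induction n with
    | zero => exact measurable_const
    | succ n ih =>
      rw [Function.iterate_succ_apply']
      exact (hd.add (ih.comp hT)).div_const c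
  have hΦ_dist (n : ℕ) (x : α) : |Φ^[n] 0 x - θ x| ≤ C * |c|⁻¹ ^ n := by
    induction n generalizing x with
    | zero => simpa using hθ x
    | succ n ih =>
      calc |Φ^[n + 1] 0 x - θ x| = |(Φ^[n] 0 (T x) - θ (T x)) / c| := by
            rw [Function.iterate_succ_apply', h x]; congr 1; ring
        _ ≤ C * |c|⁻¹ ^ n * |c|⁻¹ := by
            rw [abs_div, div_eq_mul_inv]; gcongr; exact ih (T x)
        _ = C * |c|⁻¹ ^ (n + 1) := by ring
  refine measurable_of_tendsto_metrizable hΦ_meas (tendsto_pi_nhds.2 fun x => ?_)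
  have hpow := (tendsto_pow_atTop_nhds_zero_of_lt_one (inv_nonneg.2 (abs_nonneg c))
    (inv_lt_one_of_one_lt₀ hc)).const_mul C
  rw [mul_zero] at hpow
  exact tendsto_iff_dist_tendsto_zero.2
    (squeeze_zero (fun _ => dist_nonneg) (fun n => hΦ_dist n x) hpow)

end FixedPoint

section Angle

/-- The point `e^{2πit}` of the circle. -/
def ofAngle (t : ℝ) : Circle2π := ((2 * Real.pi * t : ℝ) : Circle2π)

/-- The coordinate `θ ∈ [0, 1)` of the point `e^{2πiθ}`; it is a right inverse of `ofAngle`. -/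
def angle (z : Circle2π) : ℝ := (AddCircle.equivIco (2 * Real.pi) 0 z : ℝ) / (2 * Real.pi)

theorem ofAngle_angle (z : Circle2π) : ofAngle (angle z) = z := by
  rw [ofAngle, angle, mul_div_cancel₀ _ two_pi_pos.ne', AddCircle.coe_equivIco]

theorem angle_ofAngle (t : ℝ) : angle (ofAngle t) = Int.fract t := by
  rw [angle, ofAngle, AddCircle.coe_equivIco_mk_apply, mul_div_cancel_left₀ _ two_pi_pos.ne',
    mul_div_cancel_right₀ _ two_pi_pos.ne']

theorem fract_angle (z : Circle2π) : Int.fract (angle z) = angle z := by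
  rw [← angle_ofAngle, ofAngle_angle]

theorem angle_nonneg (z : Circle2π) : 0 ≤ angle z :=
  (Int.fract_eq_self.1 (fract_angle z)).1

theorem angle_lt_one (z : Circle2π) : angle z < 1 :=
  (Int.fract_eq_self.1 (fract_angle z)).2

theorem ofAngle_add (s t : ℝ) : ofAngle (s + t) = ofAngle s + ofAngle t := by
  rw [ofAngle, mul_add, AddCircle.coe_add, ofAngle, ofAngle]

theorem nsmul_ofAngle (n : ℕ) (t : ℝ) : n • ofAngle t = ofAngle (n * t) := by
  rw [ofAngle, ofAngle, ← AddCircle.coe_nsmul, nsmul_eq_mul, mul_left_comm]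

theorem ofAngle_natCast (n : ℕ) : ofAngle n = 0 := by
  have hmul : 2 * Real.pi * n = n • (2 * Real.pi) := by rw [nsmul_eq_mul, mul_comm]
  rw [ofAngle, hmul, AddCircle.coe_nsmul, AddCircle.coe_period, smul_zero]

theorem angle_nsmul (n : ℕ) (z : Circle2π) : angle (n • z) = Int.fract (n * angle z) := by
  rw [← angle_ofAngle, ← nsmul_ofAngle, ofAngle_angle]

theorem continuous_ofAngle : Continuous ofAngle :=
  (AddCircle.continuous_mk' _).comp (continuous_const.mul continuous_id)

theorem measurable_angle : Measurable angle :=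
  (measurable_subtype_coe.comp
    (AddCircle.measurableEquivIco (2 * Real.pi) 0).measurable).div_const _

end Angle

section Arc

variable {N : ℕ}

theorem mem_arc_iff {i : Fin N} {z : Circle2π} : z ∈ arc N i ↔ ⌊N * angle z⌋ = (i : ℕ) := by
  have hN : (0 : ℝ) < N := Nat.cast_pos.2 i.pos
  have hi : ((i : ℕ) : ℝ) + 1 ≤ N := mod_cast i.2
  rw [Int.floor_eq_iff, Int.cast_natCast, ← div_le_iff₀' hN, ← lt_div_iff₀' hN]
  refine ⟨?_, fun hz => ⟨angle z, hz, ofAngle_angle z⟩⟩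
  rintro ⟨t, ht, rfl⟩
  have ht_nonneg : 0 ≤ t := le_trans (by positivity) ht.1
  have ht_lt_one : t < 1 := ht.2.trans_le ((div_le_one hN).2 hi)
  change _ ≤ angle (ofAngle t) ∧ angle (ofAngle t) < _
  rwa [angle_ofAngle, Int.fract_eq_self.2 ⟨ht_nonneg, ht_lt_one⟩]

theorem measurableSet_arc (i : Fin N) : MeasurableSet (arc N i) := by
  have hpreimage : arc N i = (fun z => ⌊N * angle z⌋) ⁻¹' {((i : ℕ) : ℤ)} :=
    Set.ext fun _ => mem_arc_iff
  rw [hpreimage]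
  exact (measurable_angle.const_mul _).floor (measurableSet_singleton _)

theorem exists_mem_arc (hN : N ≠ 0) (z : Circle2π) : ∃ i : Fin N, z ∈ arc N i := by
  have hN_pos : (0 : ℝ) < N := Nat.cast_pos.2 (Nat.pos_of_ne_zero hN)
  obtain ⟨k, hk⟩ := Int.eq_ofNat_of_zero_le
    (Int.floor_nonneg.2 (mul_nonneg hN_pos.le (angle_nonneg z)))
  have hk_lt : (k : ℤ) < N := by
    rw [← hk, Int.floor_lt, Int.cast_natCast]
    exact mul_lt_of_lt_one_right hN_pos (angle_lt_one z)
  exact ⟨⟨k, mod_cast hk_lt⟩, mem_arc_iff.2 hk⟩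

theorem borel_le_of_measurableSet_arc_inter_preimage (hN : 1 < N) {m : MeasurableSpace Circle2π}
    (h : ∀ i : Fin N, ∀ A, MeasurableSet[m] A →
      MeasurableSet[m] (arc N i ∩ (fun z => N • z) ⁻¹' A)) :
    borel Circle2π ≤ m := by
  have hN_ne : N ≠ 0 := (zero_lt_one.trans hN).ne'
  have harc (i : Fin N) : MeasurableSet[m] (arc N i) := by
    simpa using h i Set.univ .univ
  have hpow : Measurable[m, m] fun z : Circle2π => N • z := fun A hA => by
    have hcover : ⋃ i, arc N i = Set.univ := Set.iUnion_eq_univ_iff.2 (exists_mem_arc hN_ne)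
    rw [← Set.univ_inter (_ ⁻¹' A), ← hcover, Set.iUnion_inter]
    exact .iUnion fun i => h i A hA
  have hdigit : Measurable[m] fun z => ⌊N * angle z⌋ := measurable_to_countable fun z => by
    obtain ⟨i, hi⟩ := exists_mem_arc hN_ne z
    convert harc i
    ext w
    rw [mem_arc_iff, Set.mem_preimage, Set.mem_singleton_iff, mem_arc_iff.1 hi]
  -- The `N`-adic expansion reads `θ = (⌊N θ⌋ + θ ∘ T) / N`.
  have hangle : Measurable[m] angle :=
    measurable_of_eq_add_comp_div (c := N) (C := 1) hpow
      ((measurable_from_top (f := ((↑) : ℤ → ℝ))).comp hdigit)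
      (by rwa [Nat.abs_cast, Nat.one_lt_cast])
      (fun z => by rw [abs_of_nonneg (angle_nonneg z)]; exact (angle_lt_one z).le)
      fun z => by
        rw [angle_nsmul, Function.comp_apply, Int.floor_add_fract,
          mul_div_cancel_left₀ _ (Nat.cast_ne_zero.2 hN_ne)]
  intro A hA
  have hA_eq : A = angle ⁻¹' (ofAngle ⁻¹' A) := by ext; simp [ofAngle_angle]
  rw [hA_eq]
  exact hangle (continuous_ofAngle.borel_measurable hA)

end Arc

section Branch

variable {N : ℕ}

theorem measurePreserving_nsmul (hN : N ≠ 0) :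
    MeasurePreserving (fun z : Circle2π => N • z) haarT haarT := by
  simpa using Measure.measurePreserving_zsmul haarT (Int.natCast_ne_zero.2 hN)

/-- The branch of the `N`-th root with values in the arc `A_i`, sending `e^{2πiθ}` to
`e^{2πi(θ + i)/N}` for `θ ∈ [0, 1)`. -/
def branch (i : Fin N) (z : Circle2π) : Circle2π := ofAngle ((angle z + (i : ℕ)) / N)

theorem measurable_branch (i : Fin N) : Measurable (branch i) :=
  continuous_ofAngle.measurable.comp ((measurable_angle.add_const _).div_const _)

theorem nsmul_branch (i : Fin N) (z : Circle2π) : N • branch i z = z := by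
  rw [branch, nsmul_ofAngle, mul_div_cancel₀ _ (Nat.cast_ne_zero.2 i.pos.ne'), ofAngle_add,
    ofAngle_natCast, add_zero, ofAngle_angle]

theorem branch_nsmul {i j : Fin N} {z : Circle2π} (hz : z ∈ arc N j) :
    branch i (N • z) = z + ofAngle (((i : ℕ) - (j : ℕ) : ℝ) / N) := by
  have hN : (N : ℝ) ≠ 0 := Nat.cast_ne_zero.2 i.pos.ne'
  rw [branch, angle_nsmul, Int.fract, mem_arc_iff.1 hz, Int.cast_natCast]
  nth_rw 2 [← ofAngle_angle z]
  rw [← ofAngle_add]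
  congr 1
  field_simp
  ring

theorem branch_nsmul_of_mem_arc {i : Fin N} {z : Circle2π} (hz : z ∈ arc N i) :
    branch i (N • z) = z := by
  rw [branch_nsmul hz, sub_self, zero_div, ← Nat.cast_zero, ofAngle_natCast, add_zero]

-- By `branch_nsmul`, `T⁻¹(branchᵢ⁻¹ E)` is covered by `N` rotated copies of `E`.
theorem map_branch_le (i : Fin N) : haarT.map (branch i) ≤ (N : ℝ≥0∞) • haarT := by
  refine Measure.le_iff.2 fun E hE => ?_
  let rotatedPreimage (j : Fin N) : Set Circle2π :=
    (fun z => z + ofAngle (((i : ℕ) - (j : ℕ) : ℝ) / N)) ⁻¹' E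
  calc haarT.map (branch i) E = haarT ((fun z => N • z) ⁻¹' (branch i ⁻¹' E)) := by
        rw [Measure.map_apply (measurable_branch i) hE,
          (measurePreserving_nsmul i.pos.ne').measure_preimage
            (measurable_branch i hE).nullMeasurableSet]
    _ ≤ haarT (⋃ j, rotatedPreimage j) := measure_mono fun z hz => by
        obtain ⟨j, hj⟩ := exists_mem_arc i.pos.ne' z
        rw [Set.mem_preimage, Set.mem_preimage, branch_nsmul hj] at hz
        exact Set.mem_iUnion.2 ⟨j, hz⟩
    _ ≤ ∑ j, haarT (rotatedPreimage j) := measure_iUnion_fintype_le _ _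
    _ = ((N : ℝ≥0∞) • haarT) E := by simp [rotatedPreimage, measure_preimage_add_right]

theorem quasiMeasurePreserving_branch (i : Fin N) :
    Measure.QuasiMeasurePreserving (branch i) haarT haarT :=
  ⟨measurable_branch i, (Measure.absolutelyContinuous_of_le (map_branch_le i)).trans
    Measure.smul_absolutelyContinuous⟩

theorem exists_ae_eq_comp_branch {E : Type*} [NormedAddCommGroup E] {p : ℝ≥0∞} (i : Fin N)
    (ξ : Lp E p haarT) : ∃ η : Lp E p haarT, η =ᵐ[haarT] ξ ∘ branch i := by
  have hξ : MemLp ξ p (haarT.map (branch i)) :=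
    ((Lp.memLp ξ).smul_measure (ENNReal.natCast_ne_top N)).mono_measure (map_branch_le i)
  exact ⟨_, (hξ.comp_of_map (measurable_branch i).aemeasurable).coeFn_toLp⟩

end Branch

section CuntzOperator

variable {N : ℕ} {u u' : Circle2π → ℂ}

/-- `S` is the operator `S_i^u`, given by `(S_i^u ξ)(z) = √N χ_{A_i}(z) u(z) ξ(z^N)`. -/
def IsCuntzOperator (u : Circle2π → ℂ) (i : Fin N) (S : HT →L[ℂ] HT) : Prop :=
  ∀ ξ : HT, ⇑(S ξ) =ᵐ[haarT] fun z =>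
    (Real.sqrt N : ℂ) * Set.indicator (arc N i) (fun _ => (1 : ℂ)) z * u z * ξ (N • z)

theorem ofReal_sqrt_natCast_ne_zero (hN : N ≠ 0) : (Real.sqrt N : ℂ) ≠ 0 :=
  Complex.ofReal_ne_zero.2 (Real.sqrt_ne_zero'.2 (Nat.cast_pos.2 (Nat.pos_of_ne_zero hN)))

-- The witness is `η = (S_i^u)* ξ`, that is `η(z) = N^{-1/2} u(branchᵢ z)⁻¹ ξ(branchᵢ z)`.
theorem exists_ae_forall_mem_arc_eq_mul_nsmul (hu : AEStronglyMeasurable u haarT)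
    (hu_norm : ∀ᵐ z ∂haarT, ‖u z‖ = 1) (i : Fin N) (ξ : HT) :
    ∃ η : HT, (∀ᵐ z ∂haarT, ξ (branch i z) = 0 → η z = 0) ∧
      ∀ᵐ z ∂haarT, z ∈ arc N i → Real.sqrt N * u z * η (N • z) = ξ z := by
  obtain ⟨ζ, rfl⟩ := unimodularSMul_surjective hu hu_norm ξ
  have hmul := coeFn_unimodularSMul hu hu_norm ζ
  obtain ⟨η, hη⟩ := exists_ae_eq_comp_branch i ζ
  have hsmul : ∀ᵐ z ∂haarT,
      ((Real.sqrt N : ℂ)⁻¹ • η) z = (Real.sqrt N : ℂ)⁻¹ * ζ (branch i z) := by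
    filter_upwards [hη, Lp.coeFn_smul (Real.sqrt N : ℂ)⁻¹ η] with z hηz hsmulz
    rw [hsmulz, Pi.smul_apply, hηz, smul_eq_mul, Function.comp_apply]
  refine ⟨(Real.sqrt N : ℂ)⁻¹ • η, ?_, ?_⟩
  · filter_upwards [hsmul, (quasiMeasurePreserving_branch i).ae hmul,
      (quasiMeasurePreserving_branch i).ae hu_norm] with z hsmulz hmulz hnorm hz
    have hu_ne : u (branch i z) ≠ 0 := norm_ne_zero_iff.1 (hnorm ▸ one_ne_zero)
    rw [hmulz, smul_eq_zero_iff_right hu_ne] at hz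
    rw [hsmulz, hz, mul_zero]
  · filter_upwards [(measurePreserving_nsmul i.pos.ne').quasiMeasurePreserving.ae hsmul, hmul]
      with z hsmulz hmulz hz
    have hsqrt := ofReal_sqrt_natCast_ne_zero i.pos.ne'
    rw [hsmulz, branch_nsmul_of_mem_arc hz, hmulz, smul_eq_mul]
    field_simp

namespace IsCuntzOperator

variable {i : Fin N} {S S' : HT →L[ℂ] HT}

theorem map_supportedLp (hS : IsCuntzOperator u i S) (hu : AEStronglyMeasurable u haarT)
    (hu_norm : ∀ᵐ z ∂haarT, ‖u z‖ = 1) (A : Set Circle2π) :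
    (supportedLp ℂ ℂ 2 haarT A).map (S : HT →ₗ[ℂ] HT) =
      supportedLp ℂ ℂ 2 haarT (arc N i ∩ (fun z => N • z) ⁻¹' A) := by
  refine le_antisymm (Submodule.map_le_iff_le_comap.2 fun ξ hξ => ?_) fun ξ hξ => ?_
  · have hξ_nsmul := (measurePreserving_nsmul i.pos.ne').quasiMeasurePreserving.ae
      (mem_supportedLp.1 hξ)
    rw [Submodule.mem_comap, mem_supportedLp]
    filter_upwards [hS ξ, hξ_nsmul] with z hSz hξz hz
    refine hSz.trans ?_
    by_cases hzi : z ∈ arc N i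
    · rw [hξz fun hzA => hz ⟨hzi, hzA⟩, mul_zero]
    · simp [hzi]
  · obtain ⟨η, hη, hη_nsmul⟩ := exists_ae_forall_mem_arc_eq_mul_nsmul hu hu_norm i ξ
    refine ⟨η, ?_, Lp.ext ?_⟩
    · refine mem_supportedLp.2 ?_
      filter_upwards [hη, (quasiMeasurePreserving_branch i).ae hξ] with z hηz hξz hz
      refine hηz (hξz fun hbranch => hz ?_)
      simpa only [Set.mem_preimage, nsmul_branch] using hbranch.2
    · filter_upwards [hS η, hξ, hη_nsmul] with z hSz hξz hηz
      refine hSz.trans ?_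
      by_cases hzi : z ∈ arc N i
      · rw [Set.indicator_of_mem hzi, mul_one, hηz hzi]
      · simp [hzi, hξz fun hz => hzi hz.1]

theorem measurableSet_invariantSets_arc_inter_preimage (hS : IsCuntzOperator u i S)
    (hS' : IsCuntzOperator u' i S') (hu : AEStronglyMeasurable u haarT)
    (hu_norm : ∀ᵐ z ∂haarT, ‖u z‖ = 1) (hu' : AEStronglyMeasurable u' haarT)
    (hu'_norm : ∀ᵐ z ∂haarT, ‖u' z‖ = 1) {W : HT ≃ₗᵢ[ℂ] HT} (hW : ∀ ξ, W (S ξ) = S' (W ξ))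
    {A : Set Circle2π} (hA : MeasurableSet[invariantSets W] A) :
    MeasurableSet[invariantSets W] (arc N i ∩ (fun z => N • z) ⁻¹' A) := by
  have hintertwine : (W.toLinearEquiv : HT →ₗ[ℂ] HT) ∘ₗ (S : HT →ₗ[ℂ] HT) =
      (S' : HT →ₗ[ℂ] HT) ∘ₗ (W.toLinearEquiv : HT →ₗ[ℂ] HT) := LinearMap.ext hW
  obtain ⟨hA_meas, hA_map⟩ := measurableSet_invariantSets.1 hA
  refine measurableSet_invariantSets.2 ⟨(measurableSet_arc i).inter
    ((measurePreserving_nsmul i.pos.ne').measurable hA_meas), ?_⟩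
  rw [← hS.map_supportedLp hu hu_norm, ← Submodule.map_comp, hintertwine, Submodule.map_comp,
    hA_map, hS'.map_supportedLp hu' hu'_norm, hS.map_supportedLp hu hu_norm]

theorem intertwines_iff_ae_mul_eq (hS : IsCuntzOperator u i S) (hS' : IsCuntzOperator u' i S')
    {Δ : Circle2π → ℂ} {M : HT → HT} (hM : ∀ ξ, M ξ =ᵐ[haarT] fun z => Δ z * ξ z) :
    (∀ ξ, M (S ξ) = S' (M ξ)) ↔
      ∀ᵐ z ∂haarT, z ∈ arc N i → Δ z * u z = u' z * Δ (N • z) := by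
  have hcomp (ξ : HT) : ∀ᵐ z ∂haarT, (M (S ξ) z = S' (M ξ) z ↔ z ∈ arc N i →
      ξ (N • z) ≠ 0 → Δ z * u z = u' z * Δ (N • z)) := by
    have hM_nsmul := (measurePreserving_nsmul i.pos.ne').quasiMeasurePreserving.ae (hM ξ)
    filter_upwards [hM (S ξ), hS ξ, hS' (M ξ), hM_nsmul] with z hMSz hSz hSMz hMz
    rw [hMSz, hSz, hSMz, hMz]
    by_cases hzi : z ∈ arc N i
    · have hleft : Δ z * (Real.sqrt N * 1 * u z * ξ (N • z)) =
          Real.sqrt N * ξ (N • z) * (Δ z * u z) := by ring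
      have hright : Real.sqrt N * 1 * u' z * (Δ (N • z) * ξ (N • z)) =
          Real.sqrt N * ξ (N • z) * (u' z * Δ (N • z)) := by ring
      rw [Set.indicator_of_mem hzi, hleft, hright, mul_eq_mul_left_iff]
      simp [hzi, ofReal_sqrt_natCast_ne_zero i.pos.ne', or_iff_not_imp_right]
    · simp [hzi]
  have hone : ∀ᵐ z ∂haarT, Lp.const 2 haarT (1 : ℂ) (N • z) ≠ 0 := by
    filter_upwards [(measurePreserving_nsmul i.pos.ne').quasiMeasurePreserving.ae
      (Lp.coeFn_const (p := 2) (μ := haarT) (c := (1 : ℂ)))] with z hz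
    rw [hz]
    exact one_ne_zero
  refine ⟨fun h => ?_, fun h ξ => Lp.ext ?_⟩
  · filter_upwards [hcomp (Lp.const 2 haarT 1), hone] with z hz hone_z hzi
    exact hz.1 (by rw [h]) hzi hone_z
  · filter_upwards [hcomp ξ, h] with z hz hcobound
    exact hz.2 fun hzi _ => hcobound hzi

theorem forall_intertwines_iff_cobound (hN : N ≠ 0) {S S' : Fin N → HT →L[ℂ] HT}
    (hS : ∀ i, IsCuntzOperator u i (S i)) (hS' : ∀ i, IsCuntzOperator u' i (S' i))
    {Δ : Circle2π → ℂ} {M : HT → HT} (hM : ∀ ξ, M ξ =ᵐ[haarT] fun z => Δ z * ξ z) :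
    (∀ i ξ, M (S i ξ) = S' i (M ξ)) ↔ ∀ᵐ z ∂haarT, Δ z * u z = u' z * Δ (N • z) := by
  rw [forall_congr' fun i => (hS i).intertwines_iff_ae_mul_eq (hS' i) hM, ← ae_all_iff]
  refine Filter.eventually_congr (.of_forall fun z => ⟨fun h => ?_, fun h _ _ => h⟩)
  obtain ⟨i, hi⟩ := exists_mem_arc hN z
  exact h i hi

end IsCuntzOperator

end CuntzOperator

/-- **Corollary 6.2.** The irreducible representations `π^u`, `π^{u'}` of `𝒪_N` given by
`(Sᵢ^u ξ)(z) = √N χ_{Aᵢ}(z) u(z) ξ(z^N)` are unitarily equivalent iff the cocycles `u, u'`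
cobound: `Δ(z) u(z) = u'(z) Δ(z^N)` a.e. for some measurable `Δ : 𝕋 → 𝕋`. -/
theorem diagonal_representations_unitarily_equivalent_iff_cocycles_cobound
    (N : ℕ) (hN : 2 ≤ N)
    (u u' : Circle2π → ℂ)
    (hu_meas : Measurable u) (hu_mod : ∀ z, ‖u z‖ = 1)
    (hu'_meas : Measurable u') (hu'_mod : ∀ z, ‖u' z‖ = 1)
    (Su Su' : Fin N → HT →L[ℂ] HT)
    (hSu : ∀ i, ∀ ξ : HT, ⇑(Su i ξ) =ᵐ[haarT] fun z =>
      (Real.sqrt N : ℂ) * Set.indicator (arc N i) (fun _ => (1 : ℂ)) z * u z * ξ (N • z))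
    (hSu' : ∀ i, ∀ ξ : HT, ⇑(Su' i ξ) =ᵐ[haarT] fun z =>
      (Real.sqrt N : ℂ) * Set.indicator (arc N i) (fun _ => (1 : ℂ)) z * u' z * ξ (N • z)) :
    (∃ W : HT ≃ₗᵢ[ℂ] HT, ∀ i, ∀ ξ : HT, W (Su i ξ) = Su' i (W ξ))
    ↔
    (∃ Δ : Circle2π → ℂ, Measurable Δ ∧ (∀ z, ‖Δ z‖ = 1) ∧
      ∀ᵐ z ∂haarT, Δ z * u z = u' z * Δ (N • z)) := by
  have hu := hu_meas.aestronglyMeasurable (μ := haarT)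
  have hu' := hu'_meas.aestronglyMeasurable (μ := haarT)
  have hcobound {Δ : Circle2π → ℂ} {M : HT → HT} (hM : ∀ ξ, M ξ =ᵐ[haarT] fun z => Δ z * ξ z) :=
    IsCuntzOperator.forall_intertwines_iff_cobound (by lia) hSu hSu' hM
  constructor
  · rintro ⟨W, hW⟩
    have hinvariant : borel Circle2π ≤ invariantSets W :=
      borel_le_of_measurableSet_arc_inter_preimage hN fun i _ =>
        IsCuntzOperator.measurableSet_invariantSets_arc_inter_preimage (hSu i) (hSu' i)
          hu (.of_forall hu_mod) hu' (.of_forall hu'_mod) (hW i)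
    rw [← BorelSpace.measurable_eq (α := Circle2π)] at hinvariant
    obtain ⟨Δ, hΔ_meas, hΔ_mod, hWΔ⟩ := exists_unimodular_forall_map_ae_eq_mul
      ENNReal.ofNat_ne_top W.toLinearIsometry
      fun A hA => (measurableSet_invariantSets.1 (hinvariant A hA)).2.le
    exact ⟨Δ, hΔ_meas, hΔ_mod, (hcobound hWΔ).1 hW⟩
  · rintro ⟨Δ, hΔ_meas, hΔ_mod, hΔ⟩
    have hΔ_ae : ∀ᵐ z ∂haarT, ‖Δ z‖ = 1 := .of_forall hΔ_mod
    exact ⟨.ofSurjective _ (unimodularSMul_surjective hΔ_meas.aestronglyMeasurable hΔ_ae),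
      (hcobound (coeFn_unimodularSMul hΔ_meas.aestronglyMeasurable hΔ_ae)).2 hΔ⟩
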